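/- Let π* be an optimal assignment for weights w and let δ be an allowable perturbation for (w, π*) satisfying δ(a,b) ≥ 0 for every edge assigned in π* and δ(a,b) ≤ 0 for every edge not assigned in π*. Then δ(a,b) ≤ s_w(a,b) for every edge (a,b) assigned in π*, and δ(a,b) ≥ s_w(a,b) for every edge (a,b) not assigned in π*; in particular |δ(a,b)| ≤ |s_w(a,b)| for every edge. -/

import Mathlib

open Finset Filter Topology

/-- Cost of an assignment `π : T → A` under weights `w : A × T → ℝ`. -/
noncomputable def cost {A T : Type*} [Fintype T] (w : A × T → ℝ) (π : T → A) : ℝ :=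
  ∑ b : T, w (π b, b)

/-- `πs` is an optimal assignment for weights `w`: it is injective (an assignment)
and minimizes the cost among all assignments. -/
def Optimal {A T : Type*} [Fintype T] (w : A × T → ℝ) (πs : T → A) : Prop :=
  Function.Injective πs ∧ ∀ π : T → A, Function.Injective π → cost w πs ≤ cost w π

/-- `δ` is an allowable perturbation for `(w, πs)`: `πs` remains optimal for `w + δ`. -/
def Allowable {A T : Type*} [Fintype T] (w δ : A × T → ℝ) (πs : T → A) : Prop :=
  Optimal (w + δ) πs

-- The element-wise sensitivity of edge `(a, b)` for weights `w` and assignment `πs`.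
open Classical in
noncomputable def sens {A T : Type*} [Fintype T] (w : A × T → ℝ) (πs : T → A)
    (a : A) (b : T) : ℝ :=
  if πs b = a then
    sInf {c | ∃ π : T → A, Function.Injective π ∧ π b ≠ a ∧ cost w π = c} - cost w πs
  else
    cost w πs - sInf {c | ∃ π : T → A, Function.Injective π ∧ π b = a ∧ cost w π = c}

/-!
Passing from `w` to `w + δ` changes the advantage `cost w π - cost w πs` of `πs` over a competitor
`π` by `∑ c, (δ (π c, c) - δ (πs c, c))`. The sign conditions make every summand nonpositive, and
for an allowable `δ` the new advantage is still nonnegative, so the loss at a single task `b`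
is at most the original advantage: `δ (πs b, b) - δ (π b, b) ≤ cost w π - cost w πs`. Minimizing the
right-hand side over the competitors that drop, or that use, a given edge yields its sensitivity.
-/

section Reassignment

variable {A T : Type*} {πs : T → A}

theorem exists_injective_apply_eq (hπs : Function.Injective πs) (a : A) (b : T) :
    ∃ π : T → A, Function.Injective π ∧ π b = a := by
  classical
  exact ⟨Equiv.swap (πs b) a ∘ πs, (Equiv.injective _).comp hπs, Equiv.swap_apply_left _ _⟩

theorem exists_injective_apply_ne [Nontrivial A] (hπs : Function.Injective πs) (a : A) (b : T) :
    ∃ π : T → A, Function.Injective π ∧ π b ≠ a := by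
  obtain ⟨a', ha'⟩ := exists_ne a
  obtain ⟨π, hπ, rfl⟩ := exists_injective_apply_eq hπs a' b
  exact ⟨π, hπ, ha'⟩

end Reassignment

section Cost

variable {A T : Type*} [Fintype T] {w δ : A × T → ℝ} {π πs : T → A}

theorem cost_add (w δ : A × T → ℝ) (π : T → A) : cost (w + δ) π = cost w π + cost δ π :=
  Finset.sum_add_distrib

theorem sub_le_cost_sub_cost_of_forall_le (hle : ∀ c, δ (π c, c) ≤ δ (πs c, c)) (b : T) :
    δ (πs b, b) - δ (π b, b) ≤ cost δ πs - cost δ π := by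
  rw [cost, cost, ← Finset.sum_sub_distrib]
  exact Finset.single_le_sum (f := fun c => δ (πs c, c) - δ (π c, c))
    (fun c _ => sub_nonneg.mpr (hle c)) (Finset.mem_univ b)

theorem Allowable.cost_sub_cost_le (hδ : Allowable w δ πs) (hπ : Function.Injective π) :
    cost δ πs - cost δ π ≤ cost w π - cost w πs := by
  have hopt : cost (w + δ) πs ≤ cost (w + δ) π := hδ.2 π hπ
  rw [cost_add, cost_add] at hopt
  linarith

end Cost

section Sensitivity

variable {A T : Type*} [Fintype T] {w : A × T → ℝ} {πs : T → A} {a : A} {b : T} {r : ℝ}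

theorem le_sens_of_apply_eq [Nontrivial A] (hπs : Function.Injective πs) (hab : πs b = a)
    (h : ∀ π : T → A, Function.Injective π → π b ≠ a → r ≤ cost w π - cost w πs) :
    r ≤ sens w πs a b := by
  obtain ⟨π₀, hπ₀, hb₀⟩ := exists_injective_apply_ne hπs a b
  rw [sens, if_pos hab, le_sub_iff_add_le]
  refine le_csInf ⟨_, π₀, hπ₀, hb₀, rfl⟩ ?_
  rintro _ ⟨π, hπ, hb, rfl⟩
  exact le_sub_iff_add_le.mp (h π hπ hb)

theorem sens_le_of_apply_ne (hπs : Function.Injective πs) (hab : πs b ≠ a)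
    (h : ∀ π : T → A, Function.Injective π → π b = a → cost w πs - cost w π ≤ r) :
    sens w πs a b ≤ r := by
  obtain ⟨π₀, hπ₀, hb₀⟩ := exists_injective_apply_eq hπs a b
  rw [sens, if_neg hab, sub_le_comm]
  refine le_csInf ⟨_, π₀, hπ₀, hb₀, rfl⟩ ?_
  rintro _ ⟨π, hπ, hb, rfl⟩
  exact sub_le_comm.mp (h π hπ hb)

end Sensitivity

section SignedPerturbation

variable {A T : Type*} {w δ : A × T → ℝ} {πs : T → A}

theorem apply_le_apply_of_nonneg_of_nonpos (h1 : ∀ a b, πs b = a → 0 ≤ δ (a, b))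
    (h2 : ∀ a b, πs b ≠ a → δ (a, b) ≤ 0) (a : A) (b : T) : δ (a, b) ≤ δ (πs b, b) := by
  by_cases hab : πs b = a
  · rw [hab]
  · exact (h2 a b hab).trans (h1 _ b rfl)

variable [Fintype T]

theorem Allowable.sub_le_cost_sub_cost (hδ : Allowable w δ πs)
    (h1 : ∀ a b, πs b = a → 0 ≤ δ (a, b)) (h2 : ∀ a b, πs b ≠ a → δ (a, b) ≤ 0)
    {π : T → A} (hπ : Function.Injective π) (b : T) :
    δ (πs b, b) - δ (π b, b) ≤ cost w π - cost w πs :=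
  calc
    δ (πs b, b) - δ (π b, b) ≤ cost δ πs - cost δ π :=
      sub_le_cost_sub_cost_of_forall_le
        (fun c => apply_le_apply_of_nonneg_of_nonpos h1 h2 (π c) c) b
    _ ≤ cost w π - cost w πs := hδ.cost_sub_cost_le hπ

theorem Allowable.le_sens [Nontrivial A] (hδ : Allowable w δ πs)
    (h1 : ∀ a b, πs b = a → 0 ≤ δ (a, b)) (h2 : ∀ a b, πs b ≠ a → δ (a, b) ≤ 0)
    {a : A} {b : T} (hab : πs b = a) : δ (a, b) ≤ sens w πs a b := by
  refine le_sens_of_apply_eq hδ.1 hab fun π hπ hb => ?_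
  subst hab
  calc
    δ (πs b, b) ≤ δ (πs b, b) - δ (π b, b) := (le_sub_self_iff _).mpr (h2 _ b hb.symm)
    _ ≤ cost w π - cost w πs := hδ.sub_le_cost_sub_cost h1 h2 hπ b

theorem Allowable.sens_le (hδ : Allowable w δ πs)
    (h1 : ∀ a b, πs b = a → 0 ≤ δ (a, b)) (h2 : ∀ a b, πs b ≠ a → δ (a, b) ≤ 0)
    {a : A} {b : T} (hab : πs b ≠ a) : sens w πs a b ≤ δ (a, b) := by
  refine sens_le_of_apply_ne hδ.1 hab fun π hπ hb => ?_
  subst hb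
  calc
    cost w πs - cost w π ≤ δ (π b, b) - δ (πs b, b) := by
      linarith [hδ.sub_le_cost_sub_cost h1 h2 hπ b]
    _ ≤ δ (π b, b) := sub_le_self _ (h1 _ b rfl)

-- The infima in `sens` are not junk even when `A` is infinite: they are taken over nonempty sets,
-- bounded below by `cost w πs`.
theorem stmt10_general [Nontrivial A] (hδ : Allowable w δ πs)
    (h1 : ∀ a b, πs b = a → 0 ≤ δ (a, b)) (h2 : ∀ a b, πs b ≠ a → δ (a, b) ≤ 0) :
    (∀ a b, πs b = a → δ (a, b) ≤ sens w πs a b) ∧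
    (∀ a b, πs b ≠ a → sens w πs a b ≤ δ (a, b)) ∧
    (∀ a b, |δ (a, b)| ≤ |sens w πs a b|) := by
  refine ⟨fun _ _ => hδ.le_sens h1 h2, fun _ _ => hδ.sens_le h1 h2, fun a b => ?_⟩
  by_cases hab : πs b = a
  · exact abs_le_abs_of_nonneg (h1 a b hab) (hδ.le_sens h1 h2 hab)
  · exact abs_le_abs_of_nonpos (h2 a b hab) (hδ.sens_le h1 h2 hab)

end SignedPerturbation

theorem stmt10 {A T : Type*} [Fintype A] [Fintype T] [Nonempty A] [Nonempty T]
    (hT : 2 ≤ Fintype.card T) (hAT : Fintype.card T ≤ Fintype.card A)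
    (w δ : A × T → ℝ) (πs : T → A)
    (hopt : Optimal w πs)
    (hδ : Allowable w δ πs)
    (h1 : ∀ a b, πs b = a → 0 ≤ δ (a, b))
    (h2 : ∀ a b, πs b ≠ a → δ (a, b) ≤ 0) :
    (∀ a b, πs b = a → δ (a, b) ≤ sens w πs a b) ∧
    (∀ a b, πs b ≠ a → sens w πs a b ≤ δ (a, b)) ∧
    (∀ a b, |δ (a, b)| ≤ |sens w πs a b|) := by
  have : Nontrivial A := Fintype.one_lt_card_iff_nontrivial.mp (hT.trans hAT)
  exact stmt10_general hδ h1 h2
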